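/- For every integer n ≥ 2, the five-fold convolution ∑_{i₁+⋯+i₅=n, iⱼ≥0} (2n)!/((2i₁)!⋯(2i₅)!) · 𝔠_{2i₁}⋯𝔠_{2i₅} = binom(2n-1, 4) · 𝔠_{2n} + (4n²-16n+17)/3 · binom(2n, 2) binom(2n-3, 2) · 𝔠_{2n-2} + binom(2n, 4)(2n-5)⁴ · 𝔠_{2n-4}. -/

import Mathlib

/-- Stirling numbers of the first kind with level 2. -/
def T2 : ℕ → ℕ → ℕ
  | 0, 0 => 1
  | 0, _ + 1 => 0
  | _ + 1, 0 => 0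
  | n + 1, m + 1 => T2 n m + n ^ 2 * T2 n (m + 1)

/-- Cauchy numbers with level 2: `cauchy2 n = 𝔠_{2n}`. -/
def cauchy2 (n : ℕ) : ℚ :=
  ∑ m ∈ Finset.range (n + 1), (-4 : ℚ) ^ (n - m) * (T2 n m : ℚ) / (2 * (m : ℚ) + 1)

/-- `odFact i = (2i-1)!!`, with `odFact 0 = (-1)!! = 1`. -/
def odFact : ℕ → ℚ
  | 0 => 1
  | i + 1 => (2 * (i : ℚ) + 1) * odFact i

/-- `ddf j = (2j-1)!!`, the odd double factorial extended to all integers: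
for `j ≥ 0` it is `(2j-1)(2j-3)⋯1` (with `(-1)!! = 1`), and for `j = -i < 0`
it is `(-(2i+1))!! = (-1)^i/(2i-1)!!`. -/
def ddf (j : ℤ) : ℚ :=
  if 0 ≤ j then odFact j.toNat else (-1 : ℚ) ^ (-j).toNat / odFact (-j).toNat

/-! Put `u = arsinh t`, so that `w = du/dt` satisfies `(1 + t²) w² = 1`. The recurrence defining
`T2` is the recurrence of the coefficients of the powers `u ^ (2 * m)` that is induced by
`(d/du)² = (1 + t²) (d/dt)² + t d/dt`, whence `∑ 𝔠_{2n} t²ⁿ / (2n)! = sinh u / u = t / u`.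
The same operator gives `(d/du)² u⁻ʲ = j (j + 1) u⁻ʲ⁻²`, which relates the powers `j` and `j + 2`
of `t / u`; using it for `j = 1` and `j = 3` reaches the fifth power. -/

theorem cast_choose_four {K : Type*} [Field K] [CharZero K] (k : ℕ) :
    (k.choose 4 : K) = k * (k - 1) * (k - 2) * (k - 3) / 24 := by
  rw [Nat.cast_choose_eq_descPochhammer_div]
  simp [descPochhammer_succ_eval, Nat.factorial]

theorem cast_factorial_two_mul_succ {R : Type*} [CommSemiring R] (n : ℕ) :
    ((2 * (n + 1)).factorial : R) = (2 * n + 2) * (2 * n + 1) * (2 * n).factorial := by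
  rw [Nat.mul_succ, Nat.factorial_succ, Nat.factorial_succ]
  push_cast
  ring

section PowerSeriesGeneralities

open PowerSeries Finset

theorem coeff_pow_eq_sum_antidiagonalTuple {R : Type*} [CommSemiring R] (f : R⟦X⟧) (k n : ℕ) :
    coeff n (f ^ k) = ∑ x ∈ Finset.Nat.antidiagonalTuple k n, ∏ j, coeff (x j) f := by
  have h := coeff_prod (fun _ : Fin k => f) n univ
  rw [prod_const, card_univ, Fintype.card_fin] at h
  rw [h, ← piAntidiag_univ_fin_eq_antidiagonalTuple, finsuppAntidiag, sum_map,
    ← sum_attach (piAntidiag univ n)]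
  rfl

theorem sum_multinomial_mul_prod {K : Type*} [Field K] [CharZero K] (a : ℕ → K) (d k n : ℕ) :
    ∑ x ∈ Finset.Nat.antidiagonalTuple k n,
        (Nat.multinomial univ (fun j => d * x j) : K) * ∏ j, a (x j) =
      ((d * n).factorial : K) * coeff n ((mk fun i => a i / ((d * i).factorial : K)) ^ k) := by
  rw [coeff_pow_eq_sum_antidiagonalTuple, mul_sum]
  refine sum_congr rfl fun x hx => ?_
  have hsum : ∑ j, d * x j = d * n := by
    rw [← mul_sum, Finset.Nat.mem_antidiagonalTuple.1 hx]
  have hne : (∏ j, ((d * x j).factorial : K)) ≠ 0 :=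
    prod_ne_zero_iff.2 fun j _ => Nat.cast_ne_zero.2 (Nat.factorial_ne_zero _)
  have hspec := congrArg (Nat.cast (R := K)) (Nat.multinomial_spec univ fun j => d * x j)
  rw [hsum, Nat.cast_mul, Nat.cast_prod] at hspec
  simp only [coeff_mk, prod_div_distrib]
  rw [← hspec]
  field_simp

variable {R : Type*}

theorem coeff_pow_of_lt [CommSemiring R] {f : R⟦X⟧} (hf : constantCoeff f = 0) {j k : ℕ}
    (hkj : k < j) : coeff k (f ^ j) = 0 :=
  X_pow_dvd_iff.1 (pow_dvd_pow_of_dvd (X_dvd_iff.2 hf) j) k hkj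

/-- The Euler operator `t d/dt` on power series; it multiplies the coefficient of `tᵏ` by `k`. -/
noncomputable def eulerOp (R : Type*) [CommSemiring R] : Derivation R R⟦X⟧ R⟦X⟧ :=
  (X : R⟦X⟧) • d⁄dX R

theorem eulerOp_apply [CommSemiring R] (f : R⟦X⟧) : eulerOp R f = X * d⁄dX R f := rfl

theorem coeff_eulerOp [CommSemiring R] (f : R⟦X⟧) (k : ℕ) :
    coeff k (eulerOp R f) = k * coeff k f := by
  rw [eulerOp_apply]
  rcases k with _ | k
  · simp
  · rw [coeff_succ_X_mul, coeff_derivative, mul_comm, Nat.cast_succ]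

/-- The operator `(d/du)²`, where `u = arsinh t`, conjugated by `t ^ j` and multiplied by `t²` so
that it acts on power series: `f ↦ t ^ (j + 2) * (d/du)² (t ^ (-j) * f)`. Written with the Euler
operator `θ` it is `(θ - j) (θ - j - 1) + t² (θ - j)²`. -/
noncomputable def twistedArsinhOp [CommRing R] (j : ℕ) (f : R⟦X⟧) : R⟦X⟧ :=
  let g := eulerOp R f - (j : R⟦X⟧) * f
  eulerOp R g - ((j : R⟦X⟧) + 1) * g + X ^ 2 * (eulerOp R g - (j : R⟦X⟧) * g)

theorem coeff_add_two_twistedArsinhOp [CommRing R] (j k : ℕ) (f : R⟦X⟧) :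
    coeff (k + 2) (twistedArsinhOp j f) =
      (k + 2 - j) * (k + 1 - j) * coeff (k + 2) f + (k - j) ^ 2 * coeff k f := by
  have coeff_natCast_mul (i m : ℕ) (h : R⟦X⟧) : coeff i ((m : R⟦X⟧) * h) = m * coeff i h := by
    rw [← map_natCast (C (R := R)), coeff_C_mul]
  simp only [twistedArsinhOp, ← Nat.cast_succ, map_add, map_sub, coeff_X_pow_mul, coeff_eulerOp,
    coeff_natCast_mul]
  push_cast
  ring

end PowerSeriesGeneralities

section Arsinh

open PowerSeries

/-- The power series of `sinh`. -/
noncomputable def sinhSeries : ℚ⟦X⟧ :=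
  mk fun n => if Even n then 0 else 1 / (n.factorial : ℚ)

/-- The power series of `cosh`. -/
noncomputable def coshSeries : ℚ⟦X⟧ :=
  mk fun n => if Even n then 1 / (n.factorial : ℚ) else 0

/-- The power series of `sinh t / t`. -/
noncomputable def sinhcSeries : ℚ⟦X⟧ :=
  mk fun n => if Even n then 1 / ((n + 1).factorial : ℚ) else 0

theorem constantCoeff_sinhSeries : constantCoeff sinhSeries = 0 := by
  simp [sinhSeries]

theorem coeff_one_sinhSeries : coeff 1 sinhSeries = 1 := by
  simp [sinhSeries]

theorem X_mul_sinhcSeries : X * sinhcSeries = sinhSeries := by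
  ext n
  rcases n with _ | n
  · simp [sinhSeries]
  · simp [sinhSeries, sinhcSeries, coeff_succ_X_mul, Nat.even_add_one, -Nat.not_even_iff_odd]

theorem derivative_sinhSeries : d⁄dX ℚ sinhSeries = coshSeries := by
  ext n
  simp only [coeff_derivative, sinhSeries, coshSeries, coeff_mk, Nat.even_add_one, ite_not,
    Nat.factorial_succ, ite_mul, zero_mul]
  push_cast
  congr 1
  field_simp

theorem derivative_coshSeries : d⁄dX ℚ coshSeries = sinhSeries := by
  ext n
  simp only [coeff_derivative, sinhSeries, coshSeries, coeff_mk, Nat.even_add_one, ite_not,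
    Nat.factorial_succ, ite_mul, zero_mul]
  push_cast
  congr 1
  field_simp

theorem coshSeries_sq : coshSeries ^ 2 = 1 + sinhSeries ^ 2 := by
  apply derivative.ext
  · simp only [derivative_pow, derivative_sinhSeries, derivative_coshSeries, map_add,
      derivative_one]
    ring
  · simp [sinhSeries, coshSeries]

/-- The power series of `arsinh`, as the compositional inverse of `sinhSeries`. -/
noncomputable def arsinhSeries : ℚ⟦X⟧ :=
  sinhSeries.substInvOfIsUnit (by rw [coeff_one_sinhSeries]; exact isUnit_one)

theorem constantCoeff_arsinhSeries : constantCoeff arsinhSeries = 0 :=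
  constantCoeff_substInvOfIsUnit ..

theorem hasSubst_arsinhSeries : HasSubst arsinhSeries :=
  HasSubst.substInvOfIsUnit ..

theorem sinhSeries_subst_arsinhSeries : sinhSeries.subst arsinhSeries = X :=
  subst_substInvOfIsUnit_right _ constantCoeff_sinhSeries _

theorem coshSeries_subst_arsinhSeries_sq : coshSeries.subst arsinhSeries ^ 2 = 1 + X ^ 2 := by
  have hsubst := hasSubst_arsinhSeries
  rw [← subst_pow hsubst, coshSeries_sq, subst_add hsubst, subst_pow hsubst,
    sinhSeries_subst_arsinhSeries, ← coe_substAlgHom hsubst, map_one]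

theorem coshSeries_subst_mul_derivative_arsinhSeries :
    coshSeries.subst arsinhSeries * d⁄dX ℚ arsinhSeries = 1 := by
  rw [← derivative_sinhSeries, ← derivative_subst hasSubst_arsinhSeries,
    sinhSeries_subst_arsinhSeries, derivative_X]

theorem one_add_X_sq_mul_derivative_arsinhSeries_sq :
    (1 + X ^ 2) * d⁄dX ℚ arsinhSeries ^ 2 = 1 := by
  rw [← coshSeries_subst_arsinhSeries_sq, ← mul_pow,
    coshSeries_subst_mul_derivative_arsinhSeries, one_pow]

theorem eulerOp_derivative_arsinhSeries :
    eulerOp ℚ (d⁄dX ℚ arsinhSeries) = d⁄dX ℚ arsinhSeries ^ 3 - d⁄dX ℚ arsinhSeries := by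
  have hsq := one_add_X_sq_mul_derivative_arsinhSeries_sq
  have hcosh := coshSeries_subst_mul_derivative_arsinhSeries
  have hdcosh : d⁄dX ℚ (coshSeries.subst arsinhSeries) = X * d⁄dX ℚ arsinhSeries := by
    rw [derivative_subst hasSubst_arsinhSeries, derivative_coshSeries,
      sinhSeries_subst_arsinhSeries]
  have hd := congrArg (d⁄dX ℚ) hcosh
  simp only [Derivation.leibniz, smul_eq_mul, hdcosh, derivative_one] at hd
  rw [eulerOp_apply]
  linear_combination X * d⁄dX ℚ arsinhSeries * hd - X * d⁄dX ℚ (d⁄dX ℚ arsinhSeries) * hcosh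
    - d⁄dX ℚ arsinhSeries * hsq

theorem twistedArsinhOp_zero_arsinhSeries_pow (j : ℕ) :
    twistedArsinhOp 0 (arsinhSeries ^ (j + 2)) =
      ((j + 2 : ℕ) : ℚ⟦X⟧) * ((j + 1 : ℕ) : ℚ⟦X⟧) * (X ^ 2 * arsinhSeries ^ j) := by
  have hw := one_add_X_sq_mul_derivative_arsinhSeries_sq
  have hθw := eulerOp_derivative_arsinhSeries
  have hθX : eulerOp ℚ (X : ℚ⟦X⟧) = X := by rw [eulerOp_apply, derivative_X, mul_one]
  have hθpow (i : ℕ) : eulerOp ℚ (arsinhSeries ^ (i + 1)) =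
      ((i + 1 : ℕ) : ℚ⟦X⟧) * (arsinhSeries ^ i * (X * d⁄dX ℚ arsinhSeries)) := by
    rw [Derivation.leibniz_pow, eulerOp_apply, Nat.add_sub_cancel, nsmul_eq_mul, smul_eq_mul]
  have hθθpow : eulerOp ℚ (eulerOp ℚ (arsinhSeries ^ (j + 2))) =
      ((j + 2 : ℕ) : ℚ⟦X⟧) * (arsinhSeries ^ (j + 1) * (X * d⁄dX ℚ arsinhSeries ^ 3) +
        ((j + 1 : ℕ) : ℚ⟦X⟧) * arsinhSeries ^ j * (X * d⁄dX ℚ arsinhSeries) ^ 2) := by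
    rw [hθpow]
    simp only [Derivation.leibniz, hθpow, hθX, hθw, smul_eq_mul, Derivation.map_natCast]
    ring
  simp only [twistedArsinhOp, Nat.cast_zero, zero_mul, sub_zero, zero_add, one_mul, hθθpow]
  rw [hθpow]
  linear_combination ((j + 2 : ℕ) : ℚ⟦X⟧) * (arsinhSeries ^ (j + 1) * X * d⁄dX ℚ arsinhSeries +
    ((j + 1 : ℕ) : ℚ⟦X⟧) * X ^ 2 * arsinhSeries ^ j) * hw

theorem coeff_arsinhSeries_pow_recurrence (j k : ℕ) :
    ((j : ℚ) + 2) * (j + 1) * coeff k (arsinhSeries ^ j) =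
      (k + 2) * (k + 1) * coeff (k + 2) (arsinhSeries ^ (j + 2)) +
        k ^ 2 * coeff k (arsinhSeries ^ (j + 2)) := by
  have h := congrArg (coeff (k + 2)) (twistedArsinhOp_zero_arsinhSeries_pow j)
  rw [coeff_add_two_twistedArsinhOp, ← Nat.cast_mul, ← map_natCast (C (R := ℚ)), coeff_C_mul,
    coeff_X_pow_mul] at h
  push_cast at h
  linear_combination -h

theorem coeff_odd_arsinhSeries_pow_even (n m : ℕ) :
    coeff (2 * n + 1) (arsinhSeries ^ (2 * m)) = 0 := by
  induction n generalizing m with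
  | zero =>
    rcases m with _ | m
    · simp [coeff_one]
    · exact coeff_pow_of_lt constantCoeff_arsinhSeries (by lia)
  | succ n ih =>
    rcases m with _ | m
    · simp [coeff_one]
    · have h := coeff_arsinhSeries_pow_recurrence (2 * m) (2 * n + 1)
      rw [← Nat.mul_succ 2 m, ih, ih, mul_zero, mul_zero, add_zero, eq_comm] at h
      exact (mul_eq_zero.1 h).resolve_left (by positivity)

end Arsinh

section CauchyNumbers

open PowerSeries Finset

theorem T2_eq_zero_of_lt {n m : ℕ} (hnm : n < m) : T2 n m = 0 := by
  induction n generalizing m with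
  | zero =>
    obtain ⟨m, rfl⟩ := Nat.exists_eq_succ_of_ne_zero hnm.ne'
    rfl
  | succ n ih =>
    obtain ⟨m, rfl⟩ := Nat.exists_eq_succ_of_ne_zero (Nat.ne_zero_of_lt hnm)
    rw [T2, ih (by lia), ih (by lia), mul_zero, add_zero]

theorem neg_four_pow_mul_T2_succ_succ (n m : ℕ) :
    (-4 : ℚ) ^ (n + 1 - (m + 1)) * T2 (n + 1) (m + 1) =
      (-4) ^ (n - m) * T2 n m - (2 * n) ^ 2 * ((-4) ^ (n - (m + 1)) * T2 n (m + 1)) := by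
  -- When `n ≤ m` the exponent `n - (m + 1)` truncates, harmlessly since `T2 n (m + 1) = 0`.
  rw [T2, Nat.add_sub_add_right]
  push_cast
  rcases lt_or_ge m n with hmn | hnm
  · obtain ⟨d, rfl⟩ := Nat.exists_eq_add_of_lt hmn
    rw [show m + d + 1 - m = d + 1 by lia, show m + d + 1 - (m + 1) = d by lia]
    push_cast
    ring
  · rw [T2_eq_zero_of_lt (Nat.lt_succ_of_le hnm)]
    push_cast
    ring

theorem factorial_mul_coeff_arsinhSeries_pow (n m : ℕ) :
    ((2 * n).factorial : ℚ) * coeff (2 * n) (arsinhSeries ^ (2 * m)) =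
      (2 * m).factorial * ((-4) ^ (n - m) * T2 n m) := by
  induction n generalizing m with
  | zero =>
    rcases m with _ | m
    · simp [T2]
    · rw [coeff_pow_of_lt constantCoeff_arsinhSeries (by lia), T2_eq_zero_of_lt (by lia)]
      simp
  | succ n ih =>
    rcases m with _ | m
    · simp [T2, coeff_one]
    · have hrec := coeff_arsinhSeries_pow_recurrence (2 * m) (2 * n)
      have hsucc := ih (m + 1)
      rw [cast_factorial_two_mul_succ] at hsucc
      rw [neg_four_pow_mul_T2_succ_succ, cast_factorial_two_mul_succ, cast_factorial_two_mul_succ]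
      simp only [Nat.mul_succ] at hsucc ⊢
      push_cast at hrec
      linear_combination -((2 * n).factorial : ℚ) * hrec + (2 * m + 2) * (2 * m + 1) * ih m
        - (2 * n) ^ 2 * hsucc

/-- The exponential generating function `∑ 𝔠_{2n} t²ⁿ / (2n)!` of the Cauchy numbers with
level 2. -/
noncomputable def cauchy2Series : ℚ⟦X⟧ :=
  expand 2 two_ne_zero (mk fun n => cauchy2 n / ((2 * n).factorial : ℚ))

theorem factorial_mul_coeff_cauchy2Series_pow (k n : ℕ) :
    ((2 * n).factorial : ℚ) * coeff (2 * n) (cauchy2Series ^ k) =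
      ∑ x ∈ Finset.Nat.antidiagonalTuple k n,
        (Nat.multinomial univ (fun j => 2 * x j) : ℚ) * ∏ j, cauchy2 (x j) := by
  rw [cauchy2Series, ← map_pow, coeff_expand_mul, sum_multinomial_mul_prod]

theorem factorial_mul_coeff_cauchy2Series (n : ℕ) :
    ((2 * n).factorial : ℚ) * coeff (2 * n) cauchy2Series = cauchy2 n := by
  rw [cauchy2Series, coeff_expand_mul, coeff_mk]
  field_simp

theorem coeff_even_sinhcSeries_subst_arsinhSeries (n : ℕ) :
    coeff (2 * n) (sinhcSeries.subst arsinhSeries) =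
      ∑ m ∈ range (n + 1),
        coeff (2 * n) (arsinhSeries ^ (2 * m)) / ((2 * m + 1).factorial : ℚ) := by
  have hsupp : (Function.support fun d =>
      coeff d sinhcSeries • coeff (2 * n) (arsinhSeries ^ d)) ⊆
      ((range (n + 1)).image (2 * ·) : Finset ℕ) := by
    intro d hd
    rcases d.even_or_odd' with ⟨m, rfl | rfl⟩
    · have hle : ¬2 * n < 2 * m := fun hlt =>
        hd (by simp only [coeff_pow_of_lt constantCoeff_arsinhSeries hlt, smul_zero])
      exact mem_coe.2 (mem_image_of_mem _ (mem_range.2 (by lia)))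
    · exact absurd (by simp [sinhcSeries]) hd
  rw [coeff_subst' hasSubst_arsinhSeries, finsum_eq_sum_of_support_subset _ hsupp,
    sum_image (by simp)]
  refine sum_congr rfl fun m _ => ?_
  rw [sinhcSeries, coeff_mk, if_pos (even_two_mul m), smul_eq_mul, one_div_mul_eq_div]

theorem coeff_odd_sinhcSeries_subst_arsinhSeries (n : ℕ) :
    coeff (2 * n + 1) (sinhcSeries.subst arsinhSeries) = 0 := by
  rw [coeff_subst' hasSubst_arsinhSeries]
  refine finsum_eq_zero_of_forall_eq_zero fun d => ?_
  rcases d.even_or_odd' with ⟨m, rfl | rfl⟩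
  · rw [coeff_odd_arsinhSeries_pow_even, smul_zero]
  · simp [sinhcSeries]

theorem sinhcSeries_subst_arsinhSeries : sinhcSeries.subst arsinhSeries = cauchy2Series := by
  ext k
  rcases k.even_or_odd' with ⟨n, rfl | rfl⟩
  · rw [coeff_even_sinhcSeries_subst_arsinhSeries, cauchy2Series, coeff_expand_mul, coeff_mk,
      cauchy2, sum_div]
    refine sum_congr rfl fun m _ => ?_
    have hcoeff := factorial_mul_coeff_arsinhSeries_pow n m
    rw [Nat.factorial_succ]
    push_cast
    field_simp
    linear_combination hcoeff
  · rw [coeff_odd_sinhcSeries_subst_arsinhSeries, cauchy2Series,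
      coeff_expand_of_not_dvd _ _ _ (by lia)]

theorem arsinhSeries_mul_cauchy2Series : arsinhSeries * cauchy2Series = X := by
  have hsubst := hasSubst_arsinhSeries
  rw [← sinhcSeries_subst_arsinhSeries, ← sinhSeries_subst_arsinhSeries, ← X_mul_sinhcSeries,
    subst_mul hsubst, subst_X hsubst]

theorem eulerOp_cauchy2Series :
    eulerOp ℚ cauchy2Series = cauchy2Series - d⁄dX ℚ arsinhSeries * cauchy2Series ^ 2 := by
  have hF := arsinhSeries_mul_cauchy2Series
  have hd := congrArg (d⁄dX ℚ) hF
  simp only [Derivation.leibniz, smul_eq_mul, derivative_X] at hd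
  rw [eulerOp_apply]
  linear_combination cauchy2Series * hd - d⁄dX ℚ cauchy2Series * hF

theorem twistedArsinhOp_cauchy2Series_pow (j : ℕ) :
    twistedArsinhOp j (cauchy2Series ^ j) =
      (j : ℚ⟦X⟧) * ((j + 1 : ℕ) : ℚ⟦X⟧) * cauchy2Series ^ (j + 2) := by
  have hw := one_add_X_sq_mul_derivative_arsinhSeries_sq
  have hθw := eulerOp_derivative_arsinhSeries
  have hθF := eulerOp_cauchy2Series
  have hθpow (i : ℕ) : eulerOp ℚ (cauchy2Series ^ i) =
      (i : ℚ⟦X⟧) * (cauchy2Series ^ i - d⁄dX ℚ arsinhSeries * cauchy2Series ^ (i + 1)) := by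
    rcases i with _ | i
    · simp
    · rw [Derivation.leibniz_pow, hθF, Nat.add_sub_cancel, nsmul_eq_mul, smul_eq_mul]
      ring
  have hg : eulerOp ℚ (cauchy2Series ^ j) - (j : ℚ⟦X⟧) * cauchy2Series ^ j =
      -((j : ℚ⟦X⟧) * (d⁄dX ℚ arsinhSeries * cauchy2Series ^ (j + 1))) := by
    rw [hθpow]
    ring
  simp only [twistedArsinhOp, hg]
  simp only [map_neg, Derivation.leibniz, Derivation.map_natCast, hθw, hθpow, smul_eq_mul]
  push_cast
  linear_combination ((j : ℚ⟦X⟧) * (j + 1) * cauchy2Series ^ (j + 2)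
    - j * d⁄dX ℚ arsinhSeries * cauchy2Series ^ (j + 1)) * hw

theorem coeff_cauchy2Series_pow_recurrence (j k : ℕ) :
    (j : ℚ) * (j + 1) * coeff (k + 2) (cauchy2Series ^ (j + 2)) =
      (k + 2 - j) * (k + 1 - j) * coeff (k + 2) (cauchy2Series ^ j) +
        (k - j) ^ 2 * coeff k (cauchy2Series ^ j) := by
  have h := congrArg (coeff (k + 2)) (twistedArsinhOp_cauchy2Series_pow j)
  rw [coeff_add_two_twistedArsinhOp, ← Nat.cast_mul, ← map_natCast (C (R := ℚ)),
    coeff_C_mul] at h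
  push_cast at h
  exact h.symm

theorem coeff_cauchy2Series_pow_five (k : ℕ) :
    24 * coeff (k + 4) (cauchy2Series ^ 5) =
      ((k : ℚ) + 3) * (k + 2) * (k + 1) * k * coeff (k + 4) cauchy2Series +
        (k + 1) * k * ((k + 1) ^ 2 + (k - 1) ^ 2) * coeff (k + 2) cauchy2Series +
        (k - 1) ^ 4 * coeff k cauchy2Series := by
  have hfive := coeff_cauchy2Series_pow_recurrence 3 (k + 2)
  have hthree := coeff_cauchy2Series_pow_recurrence 1 (k + 2)
  have hthree' := coeff_cauchy2Series_pow_recurrence 1 k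
  simp only [Nat.reduceAdd, add_assoc, pow_one] at hfive hthree hthree'
  push_cast at hfive hthree hthree'
  linear_combination 2 * hfive + (k + 1) * k * hthree + (k - 1) ^ 2 * hthree'

end CauchyNumbers

theorem statement7 (n : ℕ) (hn : 2 ≤ n) :
    ∑ x ∈ Finset.Nat.antidiagonalTuple 5 n,
        (Nat.multinomial Finset.univ (fun j => 2 * x j) : ℚ) * ∏ j, cauchy2 (x j) =
    (Nat.choose (2 * n - 1) 4 : ℚ) * cauchy2 n
    + (4 * (n : ℚ) ^ 2 - 16 * (n : ℚ) + 17) / 3 *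
        (Nat.choose (2 * n) 2 : ℚ) * (Nat.choose (2 * n - 3) 2 : ℚ) * cauchy2 (n - 1)
    + (Nat.choose (2 * n) 4 : ℚ) * (2 * (n : ℚ) - 5) ^ 4 * cauchy2 (n - 2) := by
  obtain ⟨m, rfl⟩ := Nat.exists_eq_add_of_le' hn
  have hfive := coeff_cauchy2Series_pow_five (2 * m)
  have hfact₂ := cast_factorial_two_mul_succ (R := ℚ) m
  have hfact₄ := cast_factorial_two_mul_succ (R := ℚ) (m + 1)
  rw [← factorial_mul_coeff_cauchy2Series_pow, Nat.add_sub_cancel, show m + 2 - 1 = m + 1 by lia,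
    show 2 * (m + 2) - 1 = 2 * m + 3 by lia, show 2 * (m + 2) - 3 = 2 * m + 1 by lia]
  simp only [← factorial_mul_coeff_cauchy2Series, cast_choose_four, Nat.cast_choose_two,
    hfact₄, hfact₂]
  push_cast at hfive ⊢
  linear_combination (2 * m + 4) * (2 * m + 3) * (2 * m + 2) * (2 * m + 1) *
    ((2 * m).factorial : ℚ) / 24 * hfive
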